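/- Let f(z) = Σ_α a(α) z^α ∈ ℝ[z1,...,zn] be a real stable polynomial of total degree at most d with non-negative coefficients, and for 0 ≤ k ≤ d let E_k(z) = Σ_{|α|=k} a(α) z^α. Then for all z ∈ ℝ^n with non-negative coordinates and 1 ≤ k ≤ d−1: (E_k(z)/C(d,k))^2 ≥ (E_{k−1}(z)/C(d,k−1)) · (E_{k+1}(z)/C(d,k+1)), where C(d,k) denotes the binomial coefficient. -/

import Mathlib

open MvPolynomial

/-!
Write `E_k` for the degree-`k` homogeneous part of `f`. For `z` with positive coordinates, the
univariate polynomial `f(t z) = ∑ E_k(z) t ^ k` has no root in the open upper half-plane, because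
`t z` has its coordinates there whenever `t` lies there; its coefficients being real, all its roots
are real. The inequality is then Newton's inequality for the coefficients of a real-rooted
polynomial of degree at most `d`, and points `z` on the boundary of the orthant are reached by
continuity.

Differentiation preserves real-rootedness (Rolle) and, on the normalized coefficients
`a_k / C(d, k)`, acts as a shift times a constant. Hence Newton's inequality reduces to the
coefficients `a_0, a_1, a_2`, where it follows by splitting off one linear factor at a time.
-/

section NewtonInequality

open Polynomial

/-- The normalized coefficients `a_k / C(d, k)` in Newton's inequalities for a polynomial
`∑ a_k X ^ k` of degree at most `d`; for `k > d` the division by zero gives `0`. -/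
noncomputable def normalizedCoeff {K : Type*} [Field K] (d : ℕ) (p : K[X]) (k : ℕ) : K :=
  p.coeff k / d.choose k

theorem normalizedCoeff_derivative {K : Type*} [Field K] [CharZero K] (d : ℕ) (p : K[X]) (k : ℕ) :
    normalizedCoeff d (derivative p) k = (d + 1) * normalizedCoeff (d + 1) p (k + 1) := by
  have hd : (d + 1 : K) ≠ 0 := d.cast_add_one_ne_zero
  have hk : (k + 1 : K) ≠ 0 := k.cast_add_one_ne_zero
  have hchoose : (d + 1 : K) * d.choose k = (d + 1).choose (k + 1) * (k + 1) :=
    mod_cast Nat.add_one_mul_choose_eq d k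
  calc normalizedCoeff d (derivative p) k
    _ = p.coeff (k + 1) * (k + 1) / d.choose k := by rw [normalizedCoeff, coeff_derivative]
    _ = (d + 1) * (p.coeff (k + 1) * (k + 1)) / ((d + 1) * d.choose k) :=
        (mul_div_mul_left _ _ hd).symm
    _ = (d + 1) * p.coeff (k + 1) * (k + 1) / ((d + 1).choose (k + 1) * (k + 1)) := by
        rw [hchoose, mul_assoc]
    _ = (d + 1) * (p.coeff (k + 1) / (d + 1).choose (k + 1)) := by
        rw [mul_div_mul_right _ _ hk, mul_div_assoc]

section OrderedField

variable {K : Type*} [Field K] [LinearOrder K] [IsStrictOrderedRing K]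

theorem coeff_zero_mul_coeff_two_le_X_sub_C_mul {D : K} (hD : 0 < D + 1) (r : K) {q : K[X]}
    (hq : 2 * (D + 1) * (q.coeff 0 * q.coeff 2) ≤ D * q.coeff 1 ^ 2) :
    let p := (Polynomial.X - Polynomial.C r) * q
    2 * (D + 2) * (p.coeff 0 * p.coeff 2) ≤ (D + 1) * p.coeff 1 ^ 2 := by
  simp only [mul_coeff_zero, coeff_X_sub_C_mul, Polynomial.coeff_sub, coeff_X_zero, coeff_C_zero]
  set a := q.coeff 0
  set b := q.coeff 1
  set c := q.coeff 2
  have hsquare : 0 ≤ ((D + 1) * a + r * b) ^ 2 := sq_nonneg _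
  have hremainder : 0 ≤ (D + 2) * r ^ 2 * (D * b ^ 2 - 2 * (D + 1) * (a * c)) :=
    mul_nonneg (mul_nonneg (by linarith) (sq_nonneg r)) (sub_nonneg.mpr hq)
  refine le_of_mul_le_mul_left ?_ hD
  linear_combination hsquare + hremainder

theorem coeff_zero_mul_coeff_two_le_of_splits {D : ℕ} {p : K[X]} (hp : p.Splits)
    (hdeg : p.natDegree ≤ D + 1) :
    2 * (D + 1) * (p.coeff 0 * p.coeff 2) ≤ D * p.coeff 1 ^ 2 := by
  induction D generalizing p with
  | zero =>
    have h2 : p.coeff 2 = 0 := coeff_eq_zero_of_natDegree_lt (by lia)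
    simp [h2]
  | succ D ih =>
    rcases eq_or_ne p.natDegree 0 with hconst | hconst
    · have h1 : p.coeff 1 = 0 := coeff_eq_zero_of_natDegree_lt (by lia)
      have h2 : p.coeff 2 = 0 := coeff_eq_zero_of_natDegree_lt (by lia)
      simp [h1, h2]
    · obtain ⟨r, hr⟩ := hp.exists_eval_eq_zero (degree_ne_of_natDegree_ne hconst)
      obtain ⟨q, rfl⟩ := dvd_iff_isRoot.mpr hr
      have hq : q ≠ 0 := right_ne_zero_of_mul (ne_zero_of_natDegree_gt hconst.bot_lt)
      have hqdeg : q.natDegree ≤ D + 1 := by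
        rw [natDegree_mul (X_sub_C_ne_zero r) hq, natDegree_X_sub_C] at hdeg
        lia
      have h := coeff_zero_mul_coeff_two_le_X_sub_C_mul D.cast_add_one_pos r
        (ih (splits_X_sub_C_mul_iff.mp hp) hqdeg)
      push_cast
      linear_combination h

theorem normalizedCoeff_zero_mul_two_le_sq {d : ℕ} {p : K[X]} (hp : p.Splits)
    (hdeg : p.natDegree ≤ d) (hd : 2 ≤ d) :
    normalizedCoeff d p 0 * normalizedCoeff d p 2 ≤ normalizedCoeff d p 1 ^ 2 := by
  obtain ⟨D, rfl⟩ := Nat.exists_eq_add_of_le' hd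
  have h : 2 * (D + 2 : K) * (p.coeff 0 * p.coeff 2) ≤ (D + 1) * p.coeff 1 ^ 2 := by
    have h := coeff_zero_mul_coeff_two_le_of_splits hp hdeg
    push_cast at h
    linear_combination h
  have hchoose : ((D + 2).choose 2 : K) = (D + 2) * (D + 1) / 2 := by
    rw [Nat.cast_choose_two]
    push_cast
    ring
  simp only [normalizedCoeff, Nat.choose_zero_right, Nat.choose_one_right, hchoose]
  push_cast
  calc p.coeff 0 / 1 * (p.coeff 2 / ((D + 2) * (D + 1) / 2))
    _ = 2 * (D + 2) * (p.coeff 0 * p.coeff 2) / ((D + 2) ^ 2 * (D + 1)) := by field_simp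
    _ ≤ (D + 1) * p.coeff 1 ^ 2 / ((D + 2) ^ 2 * (D + 1)) := by gcongr
    _ = (p.coeff 1 / (D + 2)) ^ 2 := by field_simp

end OrderedField

theorem splits_derivative {p : ℝ[X]} (hp : p.Splits) : (derivative p).Splits := by
  rcases Nat.eq_zero_or_pos p.natDegree with h0 | hpos
  · rw [derivative_of_natDegree_zero h0]
    exact Splits.zero
  · rw [splits_iff_card_roots] at hp ⊢
    have hroots := p.card_roots_le_derivative
    have hcard := (derivative p).card_roots'
    have hdeg := natDegree_derivative_lt hpos.ne'
    lia

theorem normalizedCoeff_mul_le_sq {d k : ℕ} {p : ℝ[X]} (hp : p.Splits) (hdeg : p.natDegree ≤ d)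
    (hk : k + 2 ≤ d) :
    normalizedCoeff d p k * normalizedCoeff d p (k + 2) ≤ normalizedCoeff d p (k + 1) ^ 2 := by
  induction k generalizing d p with
  | zero => exact normalizedCoeff_zero_mul_two_le_sq hp hdeg hk
  | succ k ih =>
    obtain ⟨d, rfl⟩ := Nat.exists_eq_add_of_le' (Nat.one_le_of_lt hk)
    have h := ih (splits_derivative hp)
      ((natDegree_derivative_le p).trans (Nat.sub_le_of_le_add hdeg)) (Nat.le_of_succ_le_succ hk)
    simp only [normalizedCoeff_derivative] at h
    refine le_of_mul_le_mul_left ?_ (by positivity : (0 : ℝ) < (d + 1) ^ 2)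
    linear_combination h

theorem splits_of_forall_im_pos_aeval_ne_zero {p : ℝ[X]}
    (h : ∀ w : ℂ, 0 < w.im → Polynomial.aeval w p ≠ 0) : p.Splits := by
  refine Splits.of_splits_map (algebraMap ℝ ℂ) (IsAlgClosed.splits _) fun w hw ↦ ?_
  have hroot : Polynomial.aeval w p = 0 := by
    simpa only [IsRoot.def, eval_map_algebraMap] using isRoot_of_mem_roots hw
  have hroot_conj : Polynomial.aeval (starRingEnd ℂ w) p = 0 := by
    rw [Polynomial.aeval_conj, hroot, map_zero]
  have him : w.im = 0 := by
    refine le_antisymm (not_lt.mp fun hpos ↦ h w hpos hroot) (not_lt.mp fun hneg ↦ ?_)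
    exact h _ (by simpa using hneg) hroot_conj
  exact ⟨w.re, Complex.ext rfl him.symm⟩

end NewtonInequality

section LineRestriction

variable {σ R : Type*} [CommSemiring R]

/-- The restriction `t ↦ f(t z)` of a polynomial `f` to the line through the origin and `z`, as a
univariate polynomial. -/
noncomputable def lineRestriction (f : MvPolynomial σ R) (z : σ → R) : Polynomial R :=
  aeval (fun i ↦ Polynomial.C (z i) * Polynomial.X) f

theorem aeval_lineRestriction {A : Type*} [CommSemiring A] [Algebra R A] (f : MvPolynomial σ R)
    (z : σ → R) (w : A) :
    Polynomial.aeval w (lineRestriction f z) = aeval (fun i ↦ algebraMap R A (z i) * w) f := by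
  rw [lineRestriction, comp_aeval_apply]
  simp only [map_mul, Polynomial.aeval_C, Polynomial.aeval_X]

theorem lineRestriction_monomial (α : σ →₀ ℕ) (r : R) (z : σ → R) :
    lineRestriction (monomial α r) z = Polynomial.monomial α.degree (eval z (monomial α r)) := by
  have hX : (α.prod fun _ e ↦ (Polynomial.X : Polynomial R) ^ e) = Polynomial.X ^ α.degree :=
    Finset.prod_pow_eq_pow_sum _ _ _
  simp only [lineRestriction, aeval_monomial, eval_monomial, mul_pow, Finsupp.prod_mul, hX,
    ← Polynomial.C_mul_X_pow_eq_monomial, map_mul, map_finsuppProd, map_pow, mul_assoc,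
    Polynomial.algebraMap_eq]

theorem coeff_lineRestriction (f : MvPolynomial σ R) (z : σ → R) (k : ℕ) :
    (lineRestriction f z).coeff k = eval z (homogeneousComponent k f) := by
  induction f using MvPolynomial.induction_on' with
  | monomial α r =>
    rw [lineRestriction_monomial, Polynomial.coeff_monomial,
      homogeneousComponent_of_mem (isHomogeneous_monomial r rfl), apply_ite (eval z), map_zero]
    simp only [eq_comm]
  | add f g hf hg =>
    simp only [lineRestriction, map_add, Polynomial.coeff_add] at hf hg ⊢
    rw [hf, hg]

theorem natDegree_lineRestriction_le (f : MvPolynomial σ R) (z : σ → R) :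
    (lineRestriction f z).natDegree ≤ f.totalDegree := by
  refine Polynomial.natDegree_le_iff_coeff_eq_zero.mpr fun k hk ↦ ?_
  rw [coeff_lineRestriction, homogeneousComponent_eq_zero k f hk, map_zero]

theorem normalizedCoeff_lineRestriction {K : Type*} [Field K] (d : ℕ) (f : MvPolynomial σ K)
    (z : σ → K) (k : ℕ) :
    normalizedCoeff d (lineRestriction f z) k =
      eval z (homogeneousComponent k f) / (d.choose k : K) := by
  rw [normalizedCoeff, coeff_lineRestriction]

end LineRestriction

section RealStable

variable {σ : Type*} {f : MvPolynomial σ ℝ}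

/-- A real polynomial is real stable if it has no zero with all coordinates in the open upper
half-plane. -/
def RealStable (f : MvPolynomial σ ℝ) : Prop :=
  ∀ z : σ → ℂ, (∀ i, 0 < (z i).im) → eval z (map (algebraMap ℝ ℂ) f) ≠ 0

theorem RealStable.splits_lineRestriction (hf : RealStable f) {z : σ → ℝ} (hz : ∀ i, 0 < z i) :
    (lineRestriction f z).Splits := by
  refine splits_of_forall_im_pos_aeval_ne_zero fun w hw ↦ ?_
  rw [aeval_lineRestriction, aeval_def, ← eval_map]
  exact hf _ fun i ↦ by simpa using mul_pos (hz i) hw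

theorem stmt9_general {d : ℕ} (hdeg : f.totalDegree ≤ d) (hf : RealStable f) {z : σ → ℝ}
    (hz : ∀ i, 0 ≤ z i) {k : ℕ} (hk : k + 2 ≤ d) :
    (eval z (homogeneousComponent k f) / (d.choose k : ℝ)) *
        (eval z (homogeneousComponent (k + 2) f) / (d.choose (k + 2) : ℝ)) ≤
      (eval z (homogeneousComponent (k + 1) f) / (d.choose (k + 1) : ℝ)) ^ 2 := by
  have hclosure : z ∈ closure (Set.univ.pi fun _ ↦ Set.Ioi (0 : ℝ)) := by
    simpa [closure_pi_set, Pi.le_def] using hz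
  have hcont (j : ℕ) : Continuous fun x ↦ normalizedCoeff d (lineRestriction f x) j := by
    simpa only [normalizedCoeff_lineRestriction] using (continuous_eval _).div_const _
  simp only [← normalizedCoeff_lineRestriction]
  refine le_on_closure (s := Set.univ.pi fun _ ↦ Set.Ioi 0) (fun x hx ↦ ?_)
    ((hcont _).mul (hcont _)).continuousOn ((hcont _).pow 2).continuousOn hclosure
  exact normalizedCoeff_mul_le_sq (hf.splits_lineRestriction fun i ↦ hx i trivial)
    ((natDegree_lineRestriction_le f x).trans hdeg) hk

end RealStable

/-- Generalized Newton inequalities: if `f ∈ ℝ[z₁,…,zₙ]` is real stable of total degree at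
most `d` with non-negative coefficients and `E_k` is its degree-`k` homogeneous part, then
for `z` with non-negative coordinates and `1 ≤ k ≤ d−1`:
`(E_k(z)/C(d,k))² ≥ (E_{k−1}(z)/C(d,k−1))·(E_{k+1}(z)/C(d,k+1))`. -/
theorem stmt9 (n d : ℕ) (f : MvPolynomial (Fin n) ℝ)
    (hdeg : f.totalDegree ≤ d)
    (hcoeff : ∀ α, 0 ≤ f.coeff α)
    (hstable : ∀ z : Fin n → ℂ, (∀ i, 0 < (z i).im) →
      MvPolynomial.eval z (MvPolynomial.map (algebraMap ℝ ℂ) f) ≠ 0) :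
    ∀ z : Fin n → ℝ, (∀ i, 0 ≤ z i) → ∀ k : ℕ, 1 ≤ k → k + 1 ≤ d →
      (MvPolynomial.eval z (MvPolynomial.homogeneousComponent (k - 1) f) /
          (d.choose (k - 1) : ℝ)) *
        (MvPolynomial.eval z (MvPolynomial.homogeneousComponent (k + 1) f) /
          (d.choose (k + 1) : ℝ)) ≤
      (MvPolynomial.eval z (MvPolynomial.homogeneousComponent k f) / (d.choose k : ℝ)) ^ 2 := by
  intro z hz k hk hkd
  obtain ⟨k, rfl⟩ := Nat.exists_eq_add_of_le' hk
  exact stmt9_general hdeg hstable hz hkd
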